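/- arXiv:2002.10166 — 2 statements merged into one kernel-verified Lean document; each statement's English description precedes it below -/
import Mathlib

section
/- Let (X, f) be an asymmetric normed space and (Y, g) an asymmetric normed space with Y finite-dimensional, each carrying the real normed space structure of its associated norm. Then there exists a continuous linear map T : X →L[ℝ] Y with (∃ C ≥ 0, ∀ x, g (T x) ≤ C * f x) but ¬ (∃ C ≥ 0, ∀ x, g (-(T x)) ≤ C * f x) if and only if c(X) = 0 and c(Y) = 0 (i.e., for every ε > 0 there exists x ∈ X with f x = 1 and f (-x) < ε, and there exists y ∈ Y with g y = 1 and g (-y) < ε). -/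
/-!
`c(X) > 0` says exactly that negation is bounded for `f`. Since `-T = T ∘ (-·) = (-·) ∘ T`, a
positive index on either side makes `-T` bounded together with `T`.

Conversely, if `Y` is finite-dimensional and `c(Y) = 0`, compactness of the unit sphere gives `y`
with `g y = 1` and `g (-y) = 0`. Then `g (t • y) = t⁺`, so it suffices to find a functional `φ` on
`X` that is dominated by a multiple of `f` while `-φ` is not. Take `x n` with `f (x n) = 1` and
`f (-x n) < 4⁻ⁿ`, Hahn–Banach functionals `φ n ≤ f` with `φ n (x n) = 1`, and
`φ = ∑ 2⁻ⁿ φ n ≤ 2 f`. As `φ m (x n) ≥ -f (-x n)` for all `m`, the value `φ (x n)` is at least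
`2⁻ⁿ - 2 · 4⁻ⁿ`, which is not `O(f (-x n))`.
-/

/-- `f` is an asymmetric norm on the real vector space `X`. -/
def IsAsymmNorm {X : Type*} [AddCommGroup X] [Module ℝ X] (f : X → ℝ) : Prop :=
  (∀ x, 0 ≤ f x) ∧ (∀ (c : ℝ), 0 ≤ c → ∀ x, f (c • x) = c * f x) ∧
  (∀ x y, f (x + y) ≤ f x + f y) ∧ (∀ x, f x = 0 → f (-x) = 0 → x = 0)

/-- Membership in `L_c(X, Y)` for a linear map `T`: the one-sided bound `g (T x) ≤ C * f x`. It is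
stated for bare functions so that negation is covered as well. -/
def IsAsymmBounded {X Y : Type*} (f : X → ℝ) (g : Y → ℝ) (T : X → Y) : Prop :=
  ∃ C ≥ (0 : ℝ), ∀ x, g (T x) ≤ C * f x

/-- The condition `c(X) = 0`, where `c(X)` is the infimum of `f (-x)` over all `x` with `f x = 1`.
It fails when there is no such `x`. -/
def IndexZero {X : Type*} [Neg X] (f : X → ℝ) : Prop :=
  ∀ ε > (0 : ℝ), ∃ x : X, f x = 1 ∧ f (-x) < ε

lemma IsAsymmBounded.comp {X Y Z : Type*} {f : X → ℝ} {g : Y → ℝ} {h : Z → ℝ} {S : Y → Z}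
    {T : X → Y} (hS : IsAsymmBounded g h S) (hT : IsAsymmBounded f g T) :
    IsAsymmBounded f h (S ∘ T) := by
  obtain ⟨C, hC, hS⟩ := hS
  obtain ⟨D, hD, hT⟩ := hT
  refine ⟨C * D, mul_nonneg hC hD, fun x => ?_⟩
  calc h (S (T x)) ≤ C * g (T x) := hS (T x)
    _ ≤ C * (D * f x) := by gcongr; exact hT x
    _ = C * D * f x := (mul_assoc C D (f x)).symm

namespace IsAsymmNorm

section Module

variable {X : Type*} [AddCommGroup X] [Module ℝ X] {f : X → ℝ}

lemma nonneg (hf : IsAsymmNorm f) (x : X) : 0 ≤ f x := hf.1 x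

lemma smul_of_nonneg (hf : IsAsymmNorm f) {c : ℝ} (hc : 0 ≤ c) (x : X) : f (c • x) = c * f x :=
  hf.2.1 c hc x

lemma add_le (hf : IsAsymmNorm f) (x y : X) : f (x + y) ≤ f x + f y := hf.2.2.1 x y

lemma eq_zero (hf : IsAsymmNorm f) {x : X} (hx : f x = 0) (hx' : f (-x) = 0) : x = 0 :=
  hf.2.2.2 x hx hx'

lemma map_zero (hf : IsAsymmNorm f) : f 0 = 0 := by
  simpa using hf.smul_of_nonneg le_rfl 0

lemma apply_smul (hf : IsAsymmNorm f) (c : ℝ) (x : X) : f (c • x) = c⁺ * f x + c⁻ * f (-x) := by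
  rcases le_total 0 c with hc | hc
  · simp [hf.smul_of_nonneg hc, posPart_of_nonneg hc, negPart_of_nonneg hc]
  · rw [← neg_smul_neg, hf.smul_of_nonneg (neg_nonneg.2 hc), posPart_of_nonpos hc,
      negPart_of_nonpos hc, zero_mul, zero_add]

lemma indexZero_iff_not_isAsymmBounded_neg (hf : IsAsymmNorm f) :
    IndexZero f ↔ ¬ IsAsymmBounded f f Neg.neg := by
  constructor
  · rintro h ⟨C, hC, hneg⟩
    obtain ⟨x, hx, hx_neg⟩ := h (C + 1)⁻¹ (by positivity)
    have hlt : (C + 1) * f (-x) < 1 := by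
      rwa [← lt_inv_mul_iff₀ (by positivity), mul_one]
    have hle : 1 ≤ C * f (-x) := by simpa [hx] using hneg (-x)
    linarith [hf.nonneg (-x)]
  · intro h
    by_contra! hindex
    simp only [IndexZero, not_forall, not_exists, not_and, not_lt] at hindex
    obtain ⟨ε, hε, hindex⟩ := hindex
    refine h ⟨ε⁻¹, by positivity, fun x => ?_⟩
    rcases (hf.nonneg (-x)).eq_or_lt with hx | hx
    · rw [← hx]
      exact mul_nonneg (by positivity) (hf.nonneg x)
    · have hunit : ε ≤ f (-((f (-x))⁻¹ • -x)) := by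
        apply hindex
        rw [hf.smul_of_nonneg (by positivity), inv_mul_cancel₀ hx.ne']
      rw [← smul_neg, neg_neg, hf.smul_of_nonneg (by positivity), le_inv_mul_iff₀ hx] at hunit
      rwa [le_inv_mul_iff₀ hε, mul_comm]

lemma exists_linearMap_le_apply_eq (hf : IsAsymmNorm f) (x : X) :
    ∃ φ : X →ₗ[ℝ] ℝ, (∀ z, φ z ≤ f z) ∧ φ x = f x := by
  rcases eq_or_ne x 0 with rfl | hx
  · exact ⟨0, hf.nonneg, hf.map_zero.symm⟩
  obtain ⟨φ, hφ_span, hφ_le⟩ := exists_extension_of_le_sublinear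
    (LinearPMap.mkSpanSingleton (K := ℝ) x (f x) hx) f (fun c hc => hf.smul_of_nonneg hc.le)
    hf.add_le (by
      rintro ⟨z, hz⟩
      obtain ⟨c, rfl⟩ := Submodule.mem_span_singleton.1 hz
      refine (LinearPMap.mkSpanSingleton'_apply x (f x) _ c hz).trans_le ?_
      rcases le_total 0 c with hc | hc
      · exact (hf.smul_of_nonneg hc x).ge
      · exact (mul_nonpos_of_nonpos_of_nonneg hc (hf.nonneg x)).trans (hf.nonneg _))
  exact ⟨φ, hφ_le, (hφ_span ⟨x, Submodule.mem_span_singleton_self x⟩).trans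
    (LinearPMap.mkSpanSingleton_apply ..)⟩

end Module

section Normed

variable {X : Type*} [NormedAddCommGroup X] [NormedSpace ℝ X] {f : X → ℝ}

lemma continuous_of_le_norm (hf : IsAsymmNorm f) (hle : ∀ x, f x ≤ ‖x‖) : Continuous f := by
  refine (LipschitzWith.of_le_add fun x y => ?_).continuous
  calc f x = f (y + (x - y)) := by rw [add_sub_cancel]
    _ ≤ f y + f (x - y) := hf.add_le y (x - y)
    _ ≤ f y + dist x y := by rw [dist_eq_norm]; gcongr; exact hle (x - y)

lemma exists_pos_mul_norm_le [FiniteDimensional ℝ X] (hf : IsAsymmNorm f) (hcont : Continuous f)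
    (hne : ∀ x, x ≠ 0 → f x ≠ 0) : ∃ c > 0, ∀ x, c * ‖x‖ ≤ f x := by
  rcases subsingleton_or_nontrivial X with _ | _
  · refine ⟨1, one_pos, fun x => ?_⟩
    simp [Subsingleton.elim x 0, hf.map_zero]
  obtain ⟨y, hy, hmin⟩ := (isCompact_sphere (0 : X) 1).exists_isMinOn
    (NormedSpace.sphere_nonempty.2 zero_le_one) hcont.continuousOn
  have hy_ne : y ≠ 0 := ne_zero_of_mem_unit_sphere ⟨y, hy⟩
  refine ⟨f y, (hf.nonneg y).lt_of_ne' (hne y hy_ne), fun x => ?_⟩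
  rcases eq_or_ne x 0 with rfl | hx
  · simp [hf.map_zero]
  have hmem : ‖x‖⁻¹ • x ∈ Metric.sphere (0 : X) 1 := by
    rw [mem_sphere_zero_iff_norm, norm_smul, norm_inv, norm_norm,
      inv_mul_cancel₀ (norm_ne_zero_iff.2 hx)]
  have hle : f y ≤ ‖x‖⁻¹ * f x := by
    simpa only [hf.smul_of_nonneg (inv_nonneg.2 (norm_nonneg x))] using isMinOn_iff.1 hmin _ hmem
  rwa [le_inv_mul_iff₀ (norm_pos_iff.2 hx), mul_comm] at hle

lemma exists_eq_one_neg_eq_zero [FiniteDimensional ℝ X] (hf : IsAsymmNorm f)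
    (hle : ∀ x, f x ≤ ‖x‖) (h : IndexZero f) : ∃ x, f x = 1 ∧ f (-x) = 0 := by
  obtain ⟨x, hx_ne, hx⟩ : ∃ x, x ≠ 0 ∧ f x = 0 := by
    by_contra! hne
    refine hf.indexZero_iff_not_isAsymmBounded_neg.1 h ?_
    obtain ⟨c, hc, hbound⟩ := hf.exists_pos_mul_norm_le (hf.continuous_of_le_norm hle) hne
    refine ⟨c⁻¹, by positivity, fun x => ?_⟩
    rw [le_inv_mul_iff₀ hc]
    calc c * f (-x) ≤ c * ‖x‖ := by gcongr; simpa using hle (-x)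
      _ ≤ f x := hbound x
  have hpos : 0 < f (-x) := (hf.nonneg _).lt_of_ne' fun h0 => hx_ne (hf.eq_zero hx h0)
  refine ⟨(f (-x))⁻¹ • -x, ?_, ?_⟩
  · rw [hf.smul_of_nonneg (by positivity), inv_mul_cancel₀ hpos.ne']
  · rw [← smul_neg, neg_neg, hf.smul_of_nonneg (by positivity), hx, mul_zero]

lemma exists_strongDual_le_apply_eq (hf : IsAsymmNorm f) (hle : ∀ x, f x ≤ ‖x‖) (x : X) :
    ∃ φ : StrongDual ℝ X, (∀ z, φ z ≤ f z) ∧ φ x = f x ∧ ‖φ‖ ≤ 1 := by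
  obtain ⟨φ, hφ_le, hφx⟩ := hf.exists_linearMap_le_apply_eq x
  have hbound (z : X) : ‖φ z‖ ≤ 1 * ‖z‖ := by
    rw [one_mul, Real.norm_eq_abs, abs_le']
    refine ⟨(hφ_le z).trans (hle z), ?_⟩
    simpa using (hφ_le (-z)).trans (hle (-z))
  exact ⟨φ.mkContinuous 1 hbound, hφ_le, hφx, φ.mkContinuous_norm_le zero_le_one hbound⟩

end Normed

end IsAsymmNorm

lemma exists_strongDual_hasSum_mul_apply {ι X : Type*} [NormedAddCommGroup X] [NormedSpace ℝ X]
    {w : ι → ℝ} {φ : ι → StrongDual ℝ X} (hw : ∀ i, 0 ≤ w i) (hw_sum : Summable w)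
    (hφ : ∀ i, ‖φ i‖ ≤ 1) : ∃ Φ : StrongDual ℝ X, ∀ z, HasSum (fun i => w i * φ i z) (Φ z) := by
  have hsum : Summable fun i => w i • φ i := by
    refine hw_sum.of_norm_bounded fun i => ?_
    rw [norm_smul, Real.norm_of_nonneg (hw i)]
    exact mul_le_of_le_one_right (hw i) (hφ i)
  exact ⟨∑' i, w i • φ i, fun z => hsum.hasSum.mapL (ContinuousLinearMap.apply ℝ ℝ z)⟩

lemma mul_add_le_add_mul_of_hasSum {ι : Type*} {w b : ι → ℝ} {s a c : ℝ} (hw : ∀ i, 0 ≤ w i)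
    (hw_sum : HasSum w s) (hb : ∀ i, -c ≤ b i) (ha : HasSum (fun i => w i * b i) a) (i : ι) :
    w i * (b i + c) ≤ a + s * c := by
  have hsum : HasSum (fun j => w j * (b j + c)) (a + s * c) := by
    simpa only [mul_add] using ha.add (hw_sum.mul_right c)
  exact le_hasSum hsum i fun j _ => mul_nonneg (hw j) (neg_le_iff_add_nonneg.1 (hb j))

lemma IsAsymmNorm.exists_strongDual_isAsymmBounded_posPart {X : Type*} [NormedAddCommGroup X]
    [NormedSpace ℝ X] {f : X → ℝ} (hf : IsAsymmNorm f) (hle : ∀ x, f x ≤ ‖x‖) (h : IndexZero f) :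
    ∃ φ : StrongDual ℝ X, IsAsymmBounded f (·⁺) φ ∧ ¬ IsAsymmBounded f (·⁺) (-φ) := by
  choose x hx hx_neg using fun n : ℕ => h ((1 / 4) ^ n) (by positivity)
  choose φ hφ_le hφx hφ_norm using fun n => hf.exists_strongDual_le_apply_eq hle (x n)
  have hw (n : ℕ) : (0 : ℝ) ≤ (1 / 2) ^ n := by positivity
  obtain ⟨Φ, hΦ⟩ := exists_strongDual_hasSum_mul_apply hw summable_geometric_two hφ_norm
  refine ⟨Φ, ⟨2, zero_le_two, fun z => ?_⟩, ?_⟩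
  · refine sup_le ?_ (mul_nonneg zero_le_two (hf.nonneg z))
    exact hasSum_le (fun n => mul_le_mul_of_nonneg_left (hφ_le n z) (hw n)) (hΦ z)
      (hasSum_geometric_two.mul_right (f z))
  rintro ⟨C, hC, hneg⟩
  have hupper (n : ℕ) : Φ (x n) ≤ C * f (-x n) := by
    simpa using (le_posPart _).trans (hneg (-x n))
  have hlower (n : ℕ) : (1 / 2) ^ n * (1 + f (-x n)) ≤ Φ (x n) + 2 * f (-x n) := by
    have hφ_ge (m : ℕ) : -f (-x n) ≤ φ m (x n) := by
      simpa [neg_le] using hφ_le m (-x n)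
    simpa only [hφx, hx] using
      mul_add_le_add_mul_of_hasSum hw hasSum_geometric_two hφ_ge (hΦ (x n)) n
  have hpow (n : ℕ) : (2 : ℝ) ^ n ≤ C + 2 := by
    have hquarter : (1 / 2 : ℝ) ^ n ≤ (C + 2) * (1 / 4) ^ n := by
      calc (1 / 2 : ℝ) ^ n ≤ (1 / 2) ^ n * (1 + f (-x n)) :=
            le_mul_of_one_le_right (hw n) (le_add_of_nonneg_right (hf.nonneg _))
        _ ≤ (C + 2) * f (-x n) := by linarith [hlower n, hupper n]
        _ ≤ (C + 2) * (1 / 4) ^ n := by gcongr; exact (hx_neg n).le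
    calc (2 : ℝ) ^ n = (1 / 2) ^ n * 4 ^ n := by rw [← mul_pow]; norm_num
      _ ≤ (C + 2) * (1 / 4) ^ n * 4 ^ n := by gcongr
      _ = C + 2 := by rw [mul_assoc, ← mul_pow]; norm_num
  obtain ⟨n, hn⟩ := pow_unbounded_of_one_lt (C + 2) (one_lt_two : (1 : ℝ) < 2)
  exact (hpow n).not_gt hn

/-- For `Y` finite-dimensional: `L_c(X,Y)` is not a vector space (some `T ∈ L_c(X,Y)`
has `-T ∉ L_c(X,Y)`) iff `c(X) = 0` and `c(Y) = 0`. -/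
theorem Lc_not_vector_space_iff_indices_zero
    {X Y : Type*} [NormedAddCommGroup X] [NormedSpace ℝ X]
    [NormedAddCommGroup Y] [NormedSpace ℝ Y] [FiniteDimensional ℝ Y]
    (f : X → ℝ) (g : Y → ℝ) (hf : IsAsymmNorm f) (hg : IsAsymmNorm g)
    (hXnorm : ∀ x : X, ‖x‖ = max (f x) (f (-x)))
    (hYnorm : ∀ y : Y, ‖y‖ = max (g y) (g (-y))) :
    (∃ T : X →L[ℝ] Y, (∃ C ≥ (0 : ℝ), ∀ x, g (T x) ≤ C * f x) ∧
        ¬ (∃ C ≥ (0 : ℝ), ∀ x, g (-(T x)) ≤ C * f x)) ↔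
    ((∀ ε > (0 : ℝ), ∃ x : X, f x = 1 ∧ f (-x) < ε) ∧
     (∀ ε > (0 : ℝ), ∃ y : Y, g y = 1 ∧ g (-y) < ε)) := by
  have hfle (x : X) : f x ≤ ‖x‖ := (le_max_left _ _).trans_eq (hXnorm x).symm
  have hgle (y : Y) : g y ≤ ‖y‖ := (le_max_left _ _).trans_eq (hYnorm y).symm
  constructor
  · rintro ⟨T, hT, hnegT⟩
    refine ⟨hf.indexZero_iff_not_isAsymmBounded_neg.2 fun hneg => hnegT ?_,
      hg.indexZero_iff_not_isAsymmBounded_neg.2 fun hneg => hnegT (hneg.comp hT)⟩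
    simpa only [IsAsymmBounded, Function.comp_apply, map_neg] using IsAsymmBounded.comp hT hneg
  · rintro ⟨hX, hY⟩
    obtain ⟨y, hy, hy_neg⟩ := hg.exists_eq_one_neg_eq_zero hgle hY
    obtain ⟨φ, hφ, hnegφ⟩ := hf.exists_strongDual_isAsymmBounded_posPart hfle hX
    have hsmul (c : ℝ) : g (c • y) = c⁺ := by
      rw [hg.apply_smul, hy, hy_neg, mul_one, mul_zero, add_zero]
    refine ⟨φ.smulRight y, ?_, ?_⟩
    · simpa only [ContinuousLinearMap.smulRight_apply, hsmul] using! hφ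
    · simpa only [ContinuousLinearMap.smulRight_apply, ← neg_smul, hsmul] using! hnegφ
end

section
/- Let X be a real vector space, f an asymmetric norm on X, and let X carry the real normed space structure of the associated norm ‖x‖ = max (f x) (f (-x)). Then X is a T1 space (equivalently, f x > 0 for every x ≠ 0) if and only if the dual cone X^♭ := {p : X →L[ℝ] ℝ | ∃ C ≥ 0, ∀ x, p x ≤ C * f x}, viewed as a subset of the weak-star dual of X, is weak-star dense in the whole continuous dual X*. -/
open Filter Topology

theorem continuous_of_le_of_tendsto_zero {G F : Type*} [AddGroup G] [TopologicalSpace G]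
    [IsTopologicalAddGroup G] [FunLike F G ℝ] [AddMonoidHomClass F G ℝ] {f : G → ℝ}
    (hf : Tendsto f (𝓝 0) (𝓝 0)) {g : F} (hgf : ∀ x, g x ≤ f x) : Continuous g := by
  have neg_tendsto : Tendsto (fun x ↦ -f (-x)) (𝓝 0) (𝓝 0) := by
    simpa using (hf.comp (continuous_neg.tendsto' 0 0 neg_zero)).neg
  have lower_bound (x : G) : -f (-x) ≤ g x := by
    rw [neg_le, ← map_neg]
    exact hgf (-x)
  exact continuous_of_tendsto_nhds_zero g
    (tendsto_of_tendsto_of_tendsto_of_le_of_le neg_tendsto hf lower_bound hgf)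

/-- A sublinear functional: positively homogeneous and subadditive, possibly with negative values.
Homogeneity is asked for positive scalars only, as in `exists_extension_of_le_sublinear`. -/
structure IsSublinear {X : Type*} [AddCommMonoid X] [Module ℝ X] (f : X → ℝ) : Prop where
  map_smul_of_pos : ∀ c : ℝ, 0 < c → ∀ x, f (c • x) = c * f x
  map_add_le : ∀ x y, f (x + y) ≤ f x + f y

theorem IsAsymmNorm.isSublinear {X : Type*} [AddCommGroup X] [Module ℝ X] {f : X → ℝ}
    (hf : IsAsymmNorm f) : IsSublinear f :=
  ⟨fun c hc ↦ hf.2.1 c hc.le, hf.2.2.1⟩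

namespace IsSublinear

theorem map_zero {X : Type*} [AddCommMonoid X] [Module ℝ X] {f : X → ℝ}
    (hf : IsSublinear f) : f 0 = 0 := by
  have h := hf.map_smul_of_pos 2 two_pos 0
  rw [smul_zero] at h
  linarith

variable {X : Type*} [AddCommGroup X] [Module ℝ X] {f : X → ℝ}

theorem neg_map_neg_le (hf : IsSublinear f) (x : X) : -f (-x) ≤ f x := by
  have h := hf.map_add_le x (-x)
  rw [add_neg_cancel, hf.map_zero] at h
  linarith

theorem mul_le_map_smul (hf : IsSublinear f) (c : ℝ) (x : X) : c * f x ≤ f (c • x) := by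
  rcases lt_trichotomy c 0 with hc | rfl | hc
  · calc c * f x = -f (-(c • x)) := by
          rw [← neg_smul, hf.map_smul_of_pos _ (neg_pos.2 hc), neg_mul, neg_neg]
      _ ≤ f (c • x) := hf.neg_map_neg_le _
  · rw [zero_mul, zero_smul, hf.map_zero]
  · exact (hf.map_smul_of_pos c hc x).ge

theorem exists_linearMap_le_apply_eq (hf : IsSublinear f) (x : X) :
    ∃ g : X →ₗ[ℝ] ℝ, (∀ y, g y ≤ f y) ∧ g x = f x := by
  have well_defined : ∀ c : ℝ, c • x = 0 → c • f x = 0 := fun c hc ↦ by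
    rcases smul_eq_zero.1 hc with rfl | rfl
    · exact zero_smul _ _
    · rw [hf.map_zero, smul_zero]
  obtain ⟨g, hg, hgf⟩ := exists_extension_of_le_sublinear
    (LinearPMap.mkSpanSingleton' x (f x) well_defined) f hf.map_smul_of_pos hf.map_add_le (by
      rintro ⟨y, hy⟩
      obtain ⟨c, rfl⟩ := Submodule.mem_span_singleton.1 hy
      rw [LinearPMap.mkSpanSingleton'_apply]
      exact hf.mul_le_map_smul c x)
  exact ⟨g, hgf, (hg ⟨x, Submodule.mem_span_singleton_self x⟩).trans
    (LinearPMap.mkSpanSingleton'_apply_self _ _ _ _)⟩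

theorem exists_strongDual_le_apply_eq [TopologicalSpace X] [IsTopologicalAddGroup X]
    (hf : IsSublinear f) (hf₀ : ContinuousAt f 0) (x : X) :
    ∃ p : StrongDual ℝ X, (∀ y, p y ≤ f y) ∧ p x = f x := by
  obtain ⟨g, hgf, hgx⟩ := hf.exists_linearMap_le_apply_eq x
  have hf_tendsto : Tendsto f (𝓝 0) (𝓝 0) := by simpa only [hf.map_zero] using hf₀.tendsto
  exact ⟨⟨g, continuous_of_le_of_tendsto_zero hf_tendsto hgf⟩, hgf, hgx⟩

end IsSublinear

/-- The dual cone `X^♭` of `f`, as a convex cone in the weak-star dual of `X`. -/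
def dualCone {X : Type*} [AddCommMonoid X] [Module ℝ X] [TopologicalSpace X] (f : X → ℝ) :
    PointedCone ℝ (WeakDual ℝ X) where
  carrier := {p | ∃ C ≥ (0 : ℝ), ∀ x, p x ≤ C * f x}
  zero_mem' := ⟨0, le_rfl, fun x ↦ (zero_mul (f x)).ge⟩
  add_mem' := by
    rintro p q ⟨C, hC, hp⟩ ⟨D, hD, hq⟩
    exact ⟨C + D, add_nonneg hC hD, fun x ↦ (add_le_add (hp x) (hq x)).trans_eq (add_mul ..).symm⟩
  smul_mem' := by
    rintro c p ⟨C, hC, hp⟩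
    exact ⟨c * C, mul_nonneg c.2 hC, fun x ↦
      (mul_le_mul_of_nonneg_left (hp x) c.2).trans_eq (mul_assoc ..).symm⟩

theorem IsSublinear.forall_mem_dualCone_apply_nonpos_iff {X : Type*} [AddCommGroup X] [Module ℝ X]
    [TopologicalSpace X] [IsTopologicalAddGroup X] {f : X → ℝ} (hf : IsSublinear f)
    (hf₀ : ContinuousAt f 0) {x : X} : (∀ p ∈ dualCone f, p x ≤ 0) ↔ f x ≤ 0 := by
  constructor
  · intro h
    obtain ⟨p, hpf, hpx⟩ := hf.exists_strongDual_le_apply_eq hf₀ x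
    exact hpx.ge.trans (h p ⟨1, zero_le_one, fun y ↦ (hpf y).trans_eq (one_mul _).symm⟩)
  · rintro hx p ⟨C, hC, hp⟩
    exact (hp x).trans (mul_nonpos_of_nonneg_of_nonpos hC hx)

theorem dense_pointedCone_iff {E : Type*} [AddCommGroup E] [Module ℝ E] [TopologicalSpace E]
    [IsTopologicalAddGroup E] [ContinuousSMul ℝ E] [LocallyConvexSpace ℝ E] {K : PointedCone ℝ E} :
    Dense (K : Set E) ↔ ∀ u : StrongDual ℝ E, (∀ p ∈ K, u p ≤ 0) → u = 0 := by
  constructor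
  · intro hK u hu
    have u_nonpos (p : E) : u p ≤ 0 :=
      closure_minimal hu (isClosed_le u.continuous continuous_const) (hK p)
    ext p
    refine le_antisymm (u_nonpos p) ?_
    simpa using u_nonpos (-p)
  · intro h q
    by_contra hq
    obtain ⟨u, hu_nonneg, huq⟩ :=
      ProperCone.hyperplane_separation_point (Submodule.closure K) (x₀ := q) hq
    have neg_u_eq_zero : -u = 0 :=
      h (-u) fun p hp ↦ neg_nonpos.2 (hu_nonneg p (subset_closure hp))
    simp [neg_eq_zero.1 neg_u_eq_zero] at huq

theorem exists_forall_eq_apply_of_weakDual {𝕜 X : Type*} [NontriviallyNormedField 𝕜]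
    [AddCommGroup X] [Module 𝕜 X] [TopologicalSpace X] (u : StrongDual 𝕜 (WeakDual 𝕜 X)) :
    ∃ x : X, ∀ p : WeakDual 𝕜 X, u p = p x := by
  obtain ⟨x, rfl⟩ := LinearMap.dualEmbedding_surjective (topDualPairing 𝕜 X) u
  exact ⟨x, fun _ ↦ rfl⟩

theorem dense_pointedCone_weakDual_iff {X : Type*} [AddCommGroup X] [Module ℝ X]
    [TopologicalSpace X] [SeparatingDual ℝ X] {K : PointedCone ℝ (WeakDual ℝ X)} :
    Dense (K : Set (WeakDual ℝ X)) ↔ ∀ x : X, (∀ p ∈ K, p x ≤ 0) → x = 0 := by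
  have : LocallyConvexSpace ℝ (WeakDual ℝ X) :=
    inferInstanceAs (LocallyConvexSpace ℝ (WeakBilin (topDualPairing ℝ X)))
  rw [dense_pointedCone_iff]
  constructor
  · intro h x hx
    have eval_eq_zero := h (WeakBilin.eval (topDualPairing ℝ X) x) hx
    by_contra hx₀
    obtain ⟨p, hpx⟩ := SeparatingDual.exists_ne_zero (R := ℝ) hx₀
    exact hpx (DFunLike.congr_fun eval_eq_zero (StrongDual.toWeakDual p))
  · intro h u hu
    obtain ⟨x, hux⟩ := exists_forall_eq_apply_of_weakDual u
    obtain rfl : x = 0 := h x fun p hp ↦ (hux p).ge.trans (hu p hp)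
    ext p
    exact (hux p).trans (map_zero p)

theorem continuousAt_zero_of_nonneg_of_le_norm {E : Type*} [SeminormedAddGroup E] {f : E → ℝ}
    (hf_nonneg : ∀ x, 0 ≤ f x) (hf_le : ∀ x, f x ≤ ‖x‖) : ContinuousAt f 0 := by
  have hf_zero : f 0 = 0 := le_antisymm ((hf_le 0).trans_eq norm_zero) (hf_nonneg 0)
  rw [ContinuousAt, hf_zero]
  exact squeeze_zero hf_nonneg hf_le tendsto_norm_zero

theorem T1_iff_dual_cone_weakStar_dense_general {X : Type*} [AddCommGroup X] [Module ℝ X]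
    [TopologicalSpace X] [IsTopologicalAddGroup X] [SeparatingDual ℝ X] {f : X → ℝ}
    (hf : IsSublinear f) (hf₀ : ContinuousAt f 0) :
    (∀ x : X, x ≠ 0 → 0 < f x) ↔ Dense (dualCone f : Set (WeakDual ℝ X)) := by
  simp_rw [dense_pointedCone_weakDual_iff, hf.forall_mem_dualCone_apply_nonpos_iff hf₀]
  exact forall_congr' fun x ↦ by rw [← not_le, not_imp_not]

/-- `X` is T1 (i.e. `f x > 0` for `x ≠ 0`) iff the dual cone
`X^♭ = {p | ∃ C ≥ 0, ∀ x, p x ≤ C * f x}` is weak-star dense in `X*`. -/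
theorem T1_iff_dual_cone_weakStar_dense
    {X : Type*} [NormedAddCommGroup X] [NormedSpace ℝ X]
    (f : X → ℝ) (hf : IsAsymmNorm f)
    (hXnorm : ∀ x : X, ‖x‖ = max (f x) (f (-x))) :
    (∀ x : X, x ≠ 0 → 0 < f x) ↔
    Dense {p : WeakDual ℝ X | ∃ C ≥ (0 : ℝ), ∀ x, p x ≤ C * f x} :=
  T1_iff_dual_cone_weakStar_dense_general hf.isSublinear
    (continuousAt_zero_of_nonneg_of_le_norm hf.1 fun x ↦ (le_max_left _ _).trans_eq (hXnorm x).symm)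
end
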